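/- arXiv:2502.13112 — 3 statements merged into one kernel-verified Lean document; each statement's English description precedes it below -/
import Mathlib

section
/- Let h : ℝ^d → ℝ be convex and G-Lipschitz, let S := {x : h(x) ≤ 0} be nonempty, and suppose there is σ > 0 such that every subgradient of h at every point x with h(x) = 0 has norm at least σ. Let x ∈ ℝ^d satisfy h(x) > 0 and let z be the unique point of S nearest to x in Euclidean distance. Then there exists a subgradient s_z of h at z with s_z ≠ 0 such that: (i) x − z = dist(x, S)·s_z/‖s_z‖; (ii) dist(x, S) ≤ h(x)/‖s_z‖; and (iii) for every subgradient s_x of h at x, ⟨s_x, s_z⟩ ≥ ‖s_z‖² and hence ‖s_x‖ ≥ ‖s_z‖. -/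
open scoped RealInnerProductSpace Classical

def IsSubgradAt {d : ℕ} (g : EuclideanSpace ℝ (Fin d) → ℝ)
    (x s : EuclideanSpace ℝ (Fin d)) : Prop :=
  ∀ y, g x + ⟪s, y - x⟫ ≤ g y

/-!
Let `v = x - z`. The obtuse-angle characterization of nearest points says that the affine function
`⟪v, · - z⟫` is nonpositive on `{h ≤ 0}`. As `0` is not a subgradient at a zero of `h`, some value
of `h` is negative. Comparing `h` with the affine function on segments joining `{h < 0}` to
`{⟪v, · - z⟫ > 0}` then produces a multiplier `l > 0` with `l * ⟪v, · - z⟫ ≤ h` everywhere, so that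
`l • v` is a subgradient of `h` at `z`. It is parallel to `x - z`; the subgradient inequality at `x`
is the distance bound, and monotonicity of subgradients between `x` and `z` is the comparison with
the subgradients at `x`.
-/

section NearestPoint

theorem infDist_eq_dist_of_forall_dist_le {X : Type*} [PseudoMetricSpace X] {K : Set X} {x z : X}
    (hz : z ∈ K) (hnear : ∀ w ∈ K, dist x z ≤ dist x w) : Metric.infDist x K = dist x z :=
  le_antisymm (Metric.infDist_le_dist_of_mem hz)
    ((Metric.le_infDist ⟨z, hz⟩).2 fun _ hw => hnear _ hw)

theorem inner_sub_nonpos_of_forall_dist_le {E : Type*} [NormedAddCommGroup E]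
    [InnerProductSpace ℝ E] {K : Set E} (hK : Convex ℝ K) {x z : E} (hz : z ∈ K)
    (hnear : ∀ w ∈ K, dist x z ≤ dist x w) : ∀ w ∈ K, ⟪x - z, w - z⟫ ≤ 0 := by
  rw [← norm_eq_iInf_iff_real_inner_le_zero hK hz]
  simpa only [Metric.infDist_eq_iInf, dist_eq_norm] using
    (infDist_eq_dist_of_forall_dist_le hz hnear).symm

end NearestPoint

section Multiplier

variable {E : Type*} [AddCommGroup E] [Module ℝ E] {s : Set E} {f h : E → ℝ}

-- On the segment from `y` to `p`, the chord of `h` vanishes at a point with weights proportional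
-- to `h p` and `-h y`; there `h ≤ 0`, hence `f ≤ 0`, and concavity of `f` gives the inequality.
theorem mul_le_mul_of_sublevel_subset (hh : ConvexOn ℝ s h) (hf : ConcaveOn ℝ s f)
    (hsub : ∀ y ∈ s, h y ≤ 0 → f y ≤ 0) {y p : E} (hys : y ∈ s) (hps : p ∈ s)
    (hy : h y < 0) (hp : 0 < f p) : h p * f y ≤ h y * f p := by
  have hp' : 0 < h p := not_le.1 fun hle => (hsub p hps hle).not_gt hp
  have hgap : 0 < h p - h y := by linarith
  set a := h p / (h p - h y)
  set b := -h y / (h p - h y)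
  have ha : 0 ≤ a := by positivity
  have hb : 0 ≤ b := div_nonneg (by linarith) hgap.le
  have hab : a + b = 1 := by rw [← add_div, ← sub_eq_add_neg, div_self hgap.ne']
  have hchord : h (a • y + b • p) ≤ 0 :=
    calc h (a • y + b • p) ≤ a * h y + b * h p := hh.2 hys hps ha hb hab
      _ = 0 := by ring
  have hf_chord : a * f y + b * f p ≤ 0 :=
    (hf.2 hys hps ha hb hab).trans (hsub _ (hh.1 hys hps ha hb hab) hchord)
  have hdiv : (h p * f y - h y * f p) / (h p - h y) ≤ 0 :=
    calc (h p * f y - h y * f p) / (h p - h y) = a * f y + b * f p := by ring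
      _ ≤ 0 := hf_chord
  exact sub_nonpos.1 (by simpa using (div_le_iff₀ hgap).1 hdiv)

theorem neg_of_sublevel_subset (hh : ConvexOn ℝ s h) (hf : ConcaveOn ℝ s f)
    (hsub : ∀ y ∈ s, h y ≤ 0 → f y ≤ 0) {y p : E} (hys : y ∈ s) (hps : p ∈ s)
    (hy : h y < 0) (hp : 0 < f p) : f y < 0 := by
  have hp' : 0 < h p := not_le.1 fun hle => (hsub p hps hle).not_gt hp
  have hmul := mul_le_mul_of_sublevel_subset hh hf hsub hys hps hy hp
  exact (pos_iff_neg_of_mul_neg (hmul.trans_lt (mul_neg_of_neg_of_pos hy hp))).1 hp'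

-- The multiplier separates the ratios `h y / f y` over `h y < 0` from those over `0 < f y`.
theorem exists_pos_mul_le_of_sublevel_subset (hh : ConvexOn ℝ s h) (hf : ConcaveOn ℝ s f)
    (hsub : ∀ y ∈ s, h y ≤ 0 → f y ≤ 0) (hneg : ∃ y ∈ s, h y < 0) (hpos : ∃ p ∈ s, 0 < f p) :
    ∃ l > (0 : ℝ), ∀ y ∈ s, l * f y ≤ h y := by
  obtain ⟨p₀, hp₀s, hp₀⟩ := hpos
  have hf_neg : ∀ y ∈ s, h y < 0 → f y < 0 := fun y hys hy =>
    neg_of_sublevel_subset hh hf hsub hys hp₀s hy hp₀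
  obtain ⟨l, hlower, hupper⟩ := exists_between_of_forall_le
    (s := (fun y => h y / f y) '' {y ∈ s | h y < 0})
    (t := (fun y => h y / f y) '' {y ∈ s | 0 < f y})
    (Set.Nonempty.image _ hneg) (Set.Nonempty.image _ ⟨p₀, hp₀s, hp₀⟩) <| by
      rintro _ ⟨y, ⟨hys, hy⟩, rfl⟩ _ ⟨p, ⟨hps, hp⟩, rfl⟩
      have hmul := mul_le_mul_of_sublevel_subset hh hf hsub hys hps hy hp
      rwa [le_div_iff₀ hp, div_mul_eq_mul_div, div_le_iff_of_neg (hf_neg y hys hy)]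
  have hl : 0 < l := by
    obtain ⟨y, hys, hy⟩ := hneg
    exact (div_pos_of_neg_of_neg hy (hf_neg y hys hy)).trans_le (hlower ⟨y, ⟨hys, hy⟩, rfl⟩)
  refine ⟨l, hl, fun y hys => ?_⟩
  rcases lt_or_ge (h y) 0 with hy | hy
  · exact (div_le_iff_of_neg (hf_neg y hys hy)).1 (hlower ⟨y, ⟨hys, hy⟩, rfl⟩)
  rcases lt_or_ge 0 (f y) with hfy | hfy
  · exact (le_div_iff₀ hfy).1 (hupper ⟨y, ⟨hys, hfy⟩, rfl⟩)
  · exact (mul_nonpos_of_nonneg_of_nonpos hl.le hfy).trans hy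

end Multiplier

section Subgradient

variable {E : Type*} [NormedAddCommGroup E] [InnerProductSpace ℝ E] {h : E → ℝ} {x z s t v : E}

theorem concaveOn_inner_sub (v z : E) : ConcaveOn ℝ Set.univ fun y => ⟪v, y - z⟫ := by
  simpa only [sub_eq_add_neg, Set.preimage_univ, Function.comp_def, innerₛₗ_apply_apply] using
    ((innerₛₗ ℝ v).concaveOn convex_univ).translate_left (-z)

theorem norm_le_norm_of_norm_sq_le_inner (hst : ‖t‖ ^ 2 ≤ ⟪s, t⟫) : ‖t‖ ≤ ‖s‖ := by
  have hsq : ‖t‖ * ‖t‖ ≤ ‖s‖ * ‖t‖ := by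
    simpa only [sq] using hst.trans (real_inner_le_norm s t)
  rcases (norm_nonneg t).eq_or_lt with ht | ht
  · exact ht ▸ norm_nonneg s
  · exact le_of_mul_le_mul_right hsq ht

/-- `s` is a subgradient at `x` of the function `h` on a real inner product space. This is
`IsSubgradAt` with an arbitrary inner product space in place of `EuclideanSpace ℝ (Fin d)`. -/
def IsSubgradient (h : E → ℝ) (x s : E) : Prop :=
  ∀ y, h x + ⟪s, y - x⟫ ≤ h y

theorem isSubgradient_zero_iff : IsSubgradient h x 0 ↔ ∀ y, h x ≤ h y := by
  simp [IsSubgradient]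

theorem exists_neg_of_not_isSubgradient_zero (hz : h z ≤ 0)
    (hne : ∀ w, h w = 0 → ¬ IsSubgradient h w 0) : ∃ w, h w < 0 := by
  by_contra! hnonneg
  have hz' : h z = 0 := hz.antisymm (hnonneg z)
  exact hne z hz' (isSubgradient_zero_iff.2 (hz' ▸ hnonneg))

theorem IsSubgradient.inner_sub_sub_nonneg (hs : IsSubgradient h x s) (ht : IsSubgradient h z t) :
    0 ≤ ⟪s - t, x - z⟫ := by
  have hsz := hs z
  have htx := ht x
  rw [← neg_sub x z, inner_neg_right] at hsz
  rw [inner_sub_left]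
  linarith

theorem exists_pos_isSubgradient_smul (hconv : ConvexOn ℝ Set.univ h) (hmin : ∃ w, h w < h z)
    (hv : v ≠ 0) (hnormal : ∀ w, h w ≤ h z → ⟪v, w - z⟫ ≤ 0) :
    ∃ l > (0 : ℝ), IsSubgradient h z (l • v) := by
  obtain ⟨w, hw⟩ := hmin
  have hpos : 0 < ⟪v, z + v - z⟫ := by
    rw [add_sub_cancel_left]
    exact real_inner_self_pos.2 hv
  have hshift : ConvexOn ℝ Set.univ fun y => h y - h z := hconv.add_const (-h z)
  obtain ⟨l, hl, hle⟩ := exists_pos_mul_le_of_sublevel_subset hshift (concaveOn_inner_sub v z)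
    (fun y _ hy => hnormal y (sub_nonpos.1 hy)) ⟨w, trivial, sub_neg.2 hw⟩ ⟨z + v, trivial, hpos⟩
  refine ⟨l, hl, fun y => ?_⟩
  rw [real_inner_smul_left]
  linarith [hle y trivial]

theorem eq_zero_of_inner_sub_nonpos (hconv : ConvexOn ℝ Set.univ h) (hx : 0 < h x) (hz : h z ≤ 0)
    (hnormal : ∀ w, h w ≤ 0 → ⟪x - z, w - z⟫ ≤ 0) : h z = 0 := by
  have hxz : x - z ≠ 0 := sub_ne_zero.2 fun hxz => (hxz ▸ hz).not_gt hx
  refine hz.eq_of_not_lt fun hz_neg => ?_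
  have hlt : ⟪x - z, z - z⟫ < 0 := neg_of_sublevel_subset hconv (concaveOn_inner_sub (x - z) z)
    (fun w _ => hnormal w) trivial trivial hz_neg (real_inner_self_pos.2 hxz)
  simp at hlt

theorem IsSubgradient.norm_sq_le_inner {l : ℝ} (hl : 0 ≤ l)
    (hz : IsSubgradient h z (l • (x - z))) (hx : IsSubgradient h x s) :
    ‖l • (x - z)‖ ^ 2 ≤ ⟪s, l • (x - z)⟫ := by
  have hmono := mul_nonneg hl (hx.inner_sub_sub_nonneg hz)
  rw [← real_inner_smul_right, inner_sub_left, real_inner_self_eq_norm_sq] at hmono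
  exact sub_nonneg.1 hmono

theorem IsSubgradient.norm_sub_mul_norm_le {l : ℝ} (hl : 0 ≤ l)
    (hz : IsSubgradient h z (l • (x - z))) : ‖x - z‖ * ‖l • (x - z)‖ ≤ h x - h z := by
  have hinner : ⟪l • (x - z), x - z⟫ = ‖x - z‖ * ‖l • (x - z)‖ := by
    rw [real_inner_smul_left, real_inner_self_eq_norm_sq, norm_smul_of_nonneg hl]
    ring
  linarith [hz x]

theorem stmt13_general (hconv : ConvexOn ℝ Set.univ h) (hneg : ∃ w, h w < 0) (hx : 0 < h x)
    (hzS : h z ≤ 0) (hznear : ∀ w, h w ≤ 0 → dist x z ≤ dist x w) :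
    ∃ sz, IsSubgradient h z sz ∧ sz ≠ 0 ∧
      x - z = (Metric.infDist x {w | h w ≤ 0} / ‖sz‖) • sz ∧
      Metric.infDist x {w | h w ≤ 0} ≤ h x / ‖sz‖ ∧
      ∀ sx, IsSubgradient h x sx → ‖sz‖ ^ 2 ≤ ⟪sx, sz⟫ ∧ ‖sz‖ ≤ ‖sx‖ := by
  have hnormal : ∀ w, h w ≤ 0 → ⟪x - z, w - z⟫ ≤ 0 :=
    inner_sub_nonpos_of_forall_dist_le (K := {w | h w ≤ 0})
      (by simpa using hconv.convex_le 0) hzS hznear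
  have hz : h z = 0 := eq_zero_of_inner_sub_nonpos hconv hx hzS hnormal
  have hxz : x - z ≠ 0 := sub_ne_zero.2 fun hxz => (hxz ▸ hzS).not_gt hx
  obtain ⟨l, hl, hsub⟩ := exists_pos_isSubgradient_smul hconv (hz ▸ hneg) hxz (hz ▸ hnormal)
  have hsz : l • (x - z) ≠ 0 := smul_ne_zero hl.ne' hxz
  have hdist : Metric.infDist x {w | h w ≤ 0} = ‖x - z‖ :=
    (infDist_eq_dist_of_forall_dist_le (K := {w | h w ≤ 0}) hzS hznear).trans (dist_eq_norm x z)
  refine ⟨l • (x - z), hsub, hsz, ?_, ?_, fun sx hsx => ?_⟩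
  · have hray : SameRay ℝ (x - z) (l • (x - z)) := SameRay.sameRay_nonneg_smul_right _ hl.le
    rw [hdist, div_eq_inv_mul, mul_smul, hray.norm_smul_eq, inv_smul_smul₀ (norm_ne_zero_iff.2 hsz)]
  · rw [hdist, le_div_iff₀ (norm_pos_iff.2 hsz)]
    simpa only [hz, sub_zero] using hsub.norm_sub_mul_norm_le hl.le
  · have hinner := hsub.norm_sq_le_inner hl.le hsx
    exact ⟨hinner, norm_le_norm_of_norm_sq_le_inner hinner⟩

end Subgradient

theorem stmt13 {d : ℕ} {G σ : ℝ}
    (h : EuclideanSpace ℝ (Fin d) → ℝ)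
    (hconv : ConvexOn ℝ Set.univ h)
    (hLip : ∀ u v : EuclideanSpace ℝ (Fin d), |h u - h v| ≤ G * ‖u - v‖)
    (hSne : ∃ z : EuclideanSpace ℝ (Fin d), h z ≤ 0)
    (hσ : 0 < σ)
    (hbd : ∀ z : EuclideanSpace ℝ (Fin d), h z = 0 → ∀ sz, IsSubgradAt h z sz → σ ≤ ‖sz‖)
    (x z : EuclideanSpace ℝ (Fin d)) (hx : 0 < h x)
    (hzS : h z ≤ 0)
    (hznear : ∀ w : EuclideanSpace ℝ (Fin d), h w ≤ 0 → dist x z ≤ dist x w) :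
    ∃ sz : EuclideanSpace ℝ (Fin d), IsSubgradAt h z sz ∧ sz ≠ 0 ∧
      x - z = (Metric.infDist x {w : EuclideanSpace ℝ (Fin d) | h w ≤ 0} / ‖sz‖) • sz ∧
      Metric.infDist x {w : EuclideanSpace ℝ (Fin d) | h w ≤ 0} ≤ h x / ‖sz‖ ∧
      (∀ sx : EuclideanSpace ℝ (Fin d), IsSubgradAt h x sx →
        ‖sz‖ ^ 2 ≤ ⟪sx, sz⟫ ∧ ‖sz‖ ≤ ‖sx‖) := by
  have hneg : ∃ w, h w < 0 := exists_neg_of_not_isSubgradient_zero hzS fun w hw h0 =>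
    hσ.not_ge (by simpa only [norm_zero] using hbd w hw 0 h0)
  exact stmt13_general hconv hneg hx hzS hznear
end

section
/- (Regret relative to the tightened feasible set.) Under (A1)–(A4), for any step size η > 0 and tightening parameter ρ ∈ [0, ε], the iterates x_1, …, x_T of the algorithm satisfy, for every point x*_ρ ∈ X_ρ: ∑_{t=1}^T (f_t(x_t) − f_t(x*_ρ)) ≤ 2R²/η + (η/2)·G_f²·T. -/
open scoped RealInnerProductSpace Classical

noncomputable def projBall {d : ℕ} (R : ℝ) (v : EuclideanSpace ℝ (Fin d)) :
    EuclideanSpace ℝ (Fin d) := (R / max R ‖v‖) • v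

/-!
A comparator `z` in the ball with `g z ≤ -ρ` lies in the half-space
`{w | g (x t) + ⟪s t, w - x t⟫ + ρ ≤ 0}`, by the subgradient inequality. The Polyak step is the
metric projection of `y t` onto this half-space, and it is followed by the metric projection onto
the ball, so neither moves the iterate away from `z`. The iteration is thus no further from `z`
than a plain gradient step, and the classical telescoping argument for online gradient descent
applies with `‖x 1 - z‖ ≤ 2R`.
-/

section InnerProductSpace

variable {E : Type*} [NormedAddCommGroup E] [InnerProductSpace ℝ E]

theorem norm_sub_le_norm_sub_of_inner_nonpos {v p z : E} (h : ⟪v - p, z - p⟫ ≤ 0) :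
    ‖p - z‖ ≤ ‖v - z‖ := by
  have expand : ‖v - z‖ ^ 2 = ‖v - p‖ ^ 2 - 2 * ⟪v - p, z - p⟫ + ‖p - z‖ ^ 2 := by
    rw [← sub_sub_sub_cancel_right v z p, norm_sub_sq_real, norm_sub_rev z p]
  refine le_of_sq_le_sq ?_ (norm_nonneg _)
  linarith [sq_nonneg ‖v - p‖]

/-- The metric projection onto the closed ball of radius `R ≥ 0` centred at the origin. For
`R = 0` and `v = 0` the junk value `0 / 0` is harmless, since it multiplies `v = 0`. -/
noncomputable def closedBallProj (R : ℝ) (v : E) : E :=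
  (R / max R ‖v‖) • v

theorem closedBallProj_eq_self {R : ℝ} {v : E} (hv : ‖v‖ ≤ R) : closedBallProj R v = v := by
  rcases eq_or_ne R 0 with rfl | hR
  · rw [norm_le_zero_iff.1 hv, closedBallProj, smul_zero]
  · rw [closedBallProj, max_eq_left hv, div_self hR, one_smul]

theorem closedBallProj_mem_closedBall {R : ℝ} (hR : 0 ≤ R) (v : E) :
    closedBallProj R v ∈ Metric.closedBall 0 R := by
  have hm : 0 ≤ max R ‖v‖ := le_max_of_le_left hR
  rw [mem_closedBall_zero_iff, closedBallProj, norm_smul, Real.norm_of_nonneg (by positivity),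
    div_mul_eq_mul_div, mul_div_assoc]
  exact mul_le_of_le_one_right hR (div_le_one_of_le₀ (le_max_right _ _) hm)

theorem norm_closedBallProj_sub_le {R : ℝ} {z : E} (hz : z ∈ Metric.closedBall 0 R) (v : E) :
    ‖closedBallProj R v - z‖ ≤ ‖v - z‖ := by
  rw [mem_closedBall_zero_iff] at hz
  rcases le_total ‖v‖ R with hv | hv
  · rw [closedBallProj_eq_self hv]
  apply norm_sub_le_norm_sub_of_inner_nonpos
  have hscale : 0 ≤ 1 - R / ‖v‖ := sub_nonneg.2 (div_le_one_of_le₀ hv (norm_nonneg v))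
  have hmul : R / ‖v‖ * ‖v‖ ^ 2 = ‖v‖ * R := by
    rcases eq_or_ne ‖v‖ 0 with h | h
    · simp [h]
    · field_simp
  have hinner : ⟪v, z⟫ ≤ ‖v‖ * R :=
    (real_inner_le_norm v z).trans (mul_le_mul_of_nonneg_left hz (norm_nonneg v))
  calc ⟪v - closedBallProj R v, z - closedBallProj R v⟫
      = (1 - R / ‖v‖) * (⟪v, z⟫ - R / ‖v‖ * ‖v‖ ^ 2) := by
        rw [closedBallProj, max_eq_right hv, ← real_inner_self_eq_norm_sq]
        simp only [inner_sub_left, inner_sub_right, real_inner_smul_left, real_inner_smul_right]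
        ring
    _ ≤ 0 := mul_nonpos_of_nonneg_of_nonpos hscale (by rw [hmul]; exact sub_nonpos.2 hinner)

/-- The metric projection of `y` onto the half-space `{w | a + ⟪s, w - y⟫ ≤ 0}`; its value is `y`
when `s = 0`. -/
noncomputable def halfspaceProj (s : E) (a : ℝ) (y : E) : E :=
  y - (max a 0 / ‖s‖ ^ 2) • s

theorem halfspaceProj_zero (a : ℝ) (y : E) : halfspaceProj 0 a y = y := by
  rw [halfspaceProj, smul_zero, sub_zero]

theorem norm_halfspaceProj_sub_le {s y z : E} {a : ℝ} (hz : a + ⟪s, z - y⟫ ≤ 0) :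
    ‖halfspaceProj s a y - z‖ ≤ ‖y - z‖ := by
  rcases eq_or_ne s 0 with rfl | hs
  · rw [halfspaceProj_zero]
  rcases le_total a 0 with ha | ha
  · rw [halfspaceProj, max_eq_right ha, zero_div, zero_smul, sub_zero]
  apply norm_sub_le_norm_sub_of_inner_nonpos
  have hmul : a / ‖s‖ ^ 2 * ‖s‖ ^ 2 = a := div_mul_cancel₀ a (by simpa using hs)
  calc ⟪y - halfspaceProj s a y, z - halfspaceProj s a y⟫
      = a / ‖s‖ ^ 2 * (a / ‖s‖ ^ 2 * ‖s‖ ^ 2 + ⟪s, z - y⟫) := by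
        rw [halfspaceProj, max_eq_left ha, sub_sub_cancel, ← sub_add, real_inner_smul_left,
          inner_add_right, real_inner_smul_right, real_inner_self_eq_norm_sq, add_comm]
    _ ≤ 0 := mul_nonpos_of_nonneg_of_nonpos (by positivity) (by rwa [hmul])

/-- `v` is a subgradient of `f` at `x` relative to the set `S`: the affine minorant with slope `v`
that touches `f` at `x` is required to stay below `f` on `S` only. -/
def HasSubgradientWithinAt (f : E → ℝ) (v : E) (S : Set E) (x : E) : Prop :=
  ∀ z ∈ S, f x + ⟪v, z - x⟫ ≤ f z

theorem hasSubgradientWithinAt_of_hasGradientAt [CompleteSpace E] {f : E → ℝ} {v x : E} {S : Set E}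
    (hf : ConvexOn ℝ S f) (hx : x ∈ S) (hv : HasGradientAt f v x) :
    HasSubgradientWithinAt f v S x := by
  intro z hz
  let line : ℝ →ᵃ[ℝ] E := AffineMap.lineMap x z
  have line_zero : line 0 = x := AffineMap.lineMap_apply_zero x z
  have line_one : line 1 = z := AffineMap.lineMap_apply_one x z
  have hderiv : HasDerivAt (f ∘ line) ⟪v, z - x⟫ 0 := by
    have hfderiv : HasFDerivAt f (InnerProductSpace.toDual ℝ E v) (line 0) :=
      line_zero.symm ▸ hv.hasFDerivAt
    exact hfderiv.comp_hasDerivAt 0 AffineMap.hasDerivAt_lineMap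
  have hslope : ⟪v, z - x⟫ ≤ slope (f ∘ line) 0 1 :=
    (hf.comp_affineMap line).le_slope_of_hasDerivAt (by simpa [line_zero] using hx)
      (by simpa [line_one] using hz) one_pos hderiv
  rw [slope_def_field, Function.comp_apply, Function.comp_apply, line_zero, line_one, sub_zero,
    div_one] at hslope
  linarith

theorem norm_closedBallProj_halfspaceProj_sub_le {g : E → ℝ} {R ρ : ℝ} {x s z : E} (y : E)
    (hs : HasSubgradientWithinAt g s (Metric.closedBall 0 R) x)
    (hz : z ∈ Metric.closedBall 0 R) (hgz : g z ≤ -ρ) :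
    ‖closedBallProj R (halfspaceProj s (g x + ⟪s, y - x⟫ + ρ) y) - z‖ ≤ ‖y - z‖ := by
  refine (norm_closedBallProj_sub_le hz _).trans (norm_halfspaceProj_sub_le ?_)
  have hsplit : ⟪s, y - x⟫ + ⟪s, z - y⟫ = ⟪s, z - x⟫ := by
    rw [← inner_add_right, add_comm, sub_add_sub_cancel]
  linarith [hs z hz]

theorem two_mul_sub_le_of_norm_sub_le_gradientStep {f : E → ℝ} {S : Set E} {x x' v z : E}
    {η G : ℝ} (hη : 0 ≤ η) (hv : HasSubgradientWithinAt f v S x) (hG : ‖v‖ ≤ G) (hz : z ∈ S)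
    (hx' : ‖x' - z‖ ≤ ‖x - η • v - z‖) :
    2 * η * (f x - f z) ≤ ‖x - z‖ ^ 2 - ‖x' - z‖ ^ 2 + η ^ 2 * G ^ 2 := by
  have hlin : f x - f z ≤ ⟪x - z, v⟫ := by
    have hsub := hv z hz
    rw [← neg_sub x z, inner_neg_right, real_inner_comm] at hsub
    linarith
  have hdist : ‖x' - z‖ ^ 2 ≤ ‖x - z‖ ^ 2 - 2 * η * ⟪x - z, v⟫ + η ^ 2 * G ^ 2 :=
    calc ‖x' - z‖ ^ 2 ≤ ‖x - η • v - z‖ ^ 2 := by gcongr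
      _ = ‖x - z‖ ^ 2 - 2 * η * ⟪x - z, v⟫ + η ^ 2 * ‖v‖ ^ 2 := by
        rw [sub_right_comm, norm_sub_sq_real, real_inner_smul_right, norm_smul, mul_pow,
          Real.norm_eq_abs, sq_abs, mul_assoc]
      _ ≤ ‖x - z‖ ^ 2 - 2 * η * ⟪x - z, v⟫ + η ^ 2 * G ^ 2 := by gcongr
  linarith [mul_le_mul_of_nonneg_left hlin (by positivity : 0 ≤ 2 * η)]

theorem regret_le_of_norm_sub_le_gradientStep {T : ℕ} {f : ℕ → E → ℝ} {S : Set E} {x v : ℕ → E}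
    {z : E} {η G : ℝ} (hη : 0 < η)
    (hv : ∀ t ∈ Finset.Icc 1 T, HasSubgradientWithinAt (f t) (v t) S (x t))
    (hG : ∀ t ∈ Finset.Icc 1 T, ‖v t‖ ≤ G) (hz : z ∈ S)
    (hx : ∀ t ∈ Finset.Icc 1 T, ‖x (t + 1) - z‖ ≤ ‖x t - η • v t - z‖) :
    ∑ t ∈ Finset.Icc 1 T, (f t (x t) - f t z) ≤ ‖x 1 - z‖ ^ 2 / (2 * η) + η / 2 * G ^ 2 * T := by
  have htelescope : ∑ t ∈ Finset.Icc 1 T, (‖x t - z‖ ^ 2 - ‖x (t + 1) - z‖ ^ 2) =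
      ‖x 1 - z‖ ^ 2 - ‖x (T + 1) - z‖ ^ 2 := by
    rw [← neg_sub (‖x (T + 1) - z‖ ^ 2), ← Finset.Ico_add_one_right_eq_Icc,
      ← Finset.sum_Ico_sub (fun t ↦ ‖x t - z‖ ^ 2) (by lia), ← Finset.sum_neg_distrib]
    simp only [neg_sub]
  have hscaled : 2 * η * ∑ t ∈ Finset.Icc 1 T, (f t (x t) - f t z) ≤
      ‖x 1 - z‖ ^ 2 + T * (η ^ 2 * G ^ 2) :=
    calc 2 * η * ∑ t ∈ Finset.Icc 1 T, (f t (x t) - f t z)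
        ≤ ∑ t ∈ Finset.Icc 1 T, (‖x t - z‖ ^ 2 - ‖x (t + 1) - z‖ ^ 2 + η ^ 2 * G ^ 2) := by
          rw [Finset.mul_sum]
          exact Finset.sum_le_sum fun t ht ↦
            two_mul_sub_le_of_norm_sub_le_gradientStep hη.le (hv t ht) (hG t ht) hz (hx t ht)
      _ = ‖x 1 - z‖ ^ 2 - ‖x (T + 1) - z‖ ^ 2 + T * (η ^ 2 * G ^ 2) := by
          rw [Finset.sum_add_distrib, htelescope, Finset.sum_const, Nat.card_Icc,
            Nat.add_sub_cancel, nsmul_eq_mul]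
      _ ≤ ‖x 1 - z‖ ^ 2 + T * (η ^ 2 * G ^ 2) := by gcongr; exact sub_le_self _ (sq_nonneg _)
  calc ∑ t ∈ Finset.Icc 1 T, (f t (x t) - f t z)
      ≤ (‖x 1 - z‖ ^ 2 + T * (η ^ 2 * G ^ 2)) / (2 * η) := by
        rwa [le_div_iff₀' (by positivity)]
    _ = ‖x 1 - z‖ ^ 2 / (2 * η) + η / 2 * G ^ 2 * T := by field_simp

theorem stmt14_general {T : ℕ} {R G η ρ : ℝ} {g : E → ℝ} {f : ℕ → E → ℝ} {v : ℕ → E → E}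
    {x y s : ℕ → E} {z : E} (hη : 0 < η)
    (hv : ∀ t ∈ Finset.Icc 1 T, ∀ w ∈ Metric.closedBall (0 : E) R,
      HasSubgradientWithinAt (f t) (v t w) (Metric.closedBall 0 R) w)
    (hG : ∀ t ∈ Finset.Icc 1 T, ∀ w ∈ Metric.closedBall (0 : E) R, ‖v t w‖ ≤ G)
    (hx1 : x 1 ∈ Metric.closedBall (0 : E) R)
    (hs : ∀ t ∈ Finset.Icc 1 T,
      HasSubgradientWithinAt g (s t) (Metric.closedBall 0 R) (x t))
    (hy : ∀ t ∈ Finset.Icc 1 T, y t = x t - η • v t (x t))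
    (hupd : ∀ t ∈ Finset.Icc 1 T, x (t + 1) =
      closedBallProj R (halfspaceProj (s t) (g (x t) + ⟪s t, y t - x t⟫ + ρ) (y t)))
    (hz : z ∈ Metric.closedBall (0 : E) R) (hgz : g z ≤ -ρ) :
    ∑ t ∈ Finset.Icc 1 T, (f t (x t) - f t z) ≤ 2 * R ^ 2 / η + η / 2 * G ^ 2 * T := by
  have hR : 0 ≤ R := Metric.nonempty_closedBall.1 ⟨z, hz⟩
  have hball : ∀ t ∈ Finset.Icc 1 T, x t ∈ Metric.closedBall (0 : E) R := by
    rintro (_ | _ | t) ht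
    · simp at ht
    · exact hx1
    · rw [hupd (t + 1) (by grind)]
      exact closedBallProj_mem_closedBall hR _
  have hstep : ∀ t ∈ Finset.Icc 1 T, ‖x (t + 1) - z‖ ≤ ‖x t - η • v t (x t) - z‖ := by
    intro t ht
    rw [hupd t ht, ← hy t ht]
    exact norm_closedBallProj_halfspaceProj_sub_le (y t) (hs t ht) hz hgz
  have hdist : ‖x 1 - z‖ ≤ 2 * R := by
    rw [mem_closedBall_zero_iff] at hx1 hz
    linarith [norm_sub_le (x 1) z]
  calc ∑ t ∈ Finset.Icc 1 T, (f t (x t) - f t z)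
      ≤ ‖x 1 - z‖ ^ 2 / (2 * η) + η / 2 * G ^ 2 * T :=
        regret_le_of_norm_sub_le_gradientStep hη (fun t ht ↦ hv t ht _ (hball t ht))
          (fun t ht ↦ hG t ht _ (hball t ht)) hz hstep
    _ ≤ (2 * R) ^ 2 / (2 * η) + η / 2 * G ^ 2 * T := by gcongr
    _ = 2 * R ^ 2 / η + η / 2 * G ^ 2 * T := by field_simp

end InnerProductSpace

theorem ite_projBall_eq_closedBallProj_halfspaceProj {d : ℕ} (R a : ℝ)
    (s y : EuclideanSpace ℝ (Fin d)) :
    (if s ≠ 0 then projBall R (y - (max a 0 / ‖s‖ ^ 2) • s) else projBall R y) =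
      closedBallProj R (halfspaceProj s a y) := by
  split_ifs with hs
  · rfl
  · rw [not_not.1 hs, halfspaceProj_zero]
    rfl

theorem stmt14 {d T : ℕ} (hT : 1 ≤ T)
    {R Gf Gg ε σ η ρ : ℝ}
    (g : EuclideanSpace ℝ (Fin d) → ℝ)
    (f : ℕ → EuclideanSpace ℝ (Fin d) → ℝ)
    (x y s : ℕ → EuclideanSpace ℝ (Fin d))
    (hR : 0 < R) (hGf : 0 < Gf) (hGg : 0 < Gg)
    (hgconv : ConvexOn ℝ Set.univ g)
    (hA1 : {z : EuclideanSpace ℝ (Fin d) | g z ≤ 0} ⊆ Metric.closedBall 0 R)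
    (hfconv : ∀ t ∈ Finset.Icc 1 T, ConvexOn ℝ Set.univ (f t))
    (hfdiff : ∀ t ∈ Finset.Icc 1 T, Differentiable ℝ (f t))
    (hA2 : ∀ t ∈ Finset.Icc 1 T, ∀ z ∈ Metric.closedBall (0 : EuclideanSpace ℝ (Fin d)) R,
      ‖gradient (f t) z‖ ≤ Gf)
    (hA3 : ∀ z ∈ Metric.closedBall (0 : EuclideanSpace ℝ (Fin d)) R,
      ∀ sz, IsSubgradAt g z sz → ‖sz‖ ≤ Gg)
    (hσ : 0 < σ) (hε : 0 < ε) (hσGg : σ ≤ Gg)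
    (hA4ne : ∃ z, g z = -ε)
    (hA4 : ∀ z : EuclideanSpace ℝ (Fin d), g z = -ε → ∀ sz, IsSubgradAt g z sz → σ ≤ ‖sz‖)
    (hη : 0 < η) (hρ0 : 0 ≤ ρ) (hρε : ρ ≤ ε)
    (hx1 : x 1 ∈ Metric.closedBall (0 : EuclideanSpace ℝ (Fin d)) R)
    (hs : ∀ t ∈ Finset.Icc 1 T, IsSubgradAt g (x t) (s t))
    (hy : ∀ t ∈ Finset.Icc 1 T, y t = x t - η • gradient (f t) (x t))
    (hupd : ∀ t ∈ Finset.Icc 1 T,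
      x (t + 1) = if s t ≠ 0 then
          projBall R (y t - ((max (g (x t) + ⟪s t, y t - x t⟫ + ρ) 0) / ‖s t‖ ^ 2) • s t)
        else projBall R (y t))
    :
    ∀ xrho : EuclideanSpace ℝ (Fin d), g xrho ≤ -ρ →
      ∑ t ∈ Finset.Icc 1 T, (f t (x t) - f t xrho) ≤
        2 * R ^ 2 / η + η / 2 * Gf ^ 2 * T := by
  intro z hz
  exact stmt14_general hη
    (fun t ht w hw ↦ hasSubgradientWithinAt_of_hasGradientAt
      ((hfconv t ht).subset (Set.subset_univ _) (convex_closedBall 0 R)) hw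
      (hfdiff t ht w).hasGradientAt)
    hA2 hx1 (fun t ht w _ ↦ hs t ht w) hy
    (fun t ht ↦ (hupd t ht).trans (ite_projBall_eq_closedBallProj_halfspaceProj _ _ _ _))
    (hA1 (hz.trans (neg_nonpos.2 hρ0))) hz
end

section
/- (Feasibility recursion.) Under (A1)–(A4), for any step size η > 0 and tightening parameter ρ ∈ [0, ε], the iterates of the algorithm satisfy, for all t ∈ {1,…,T}: dist(x_{t+1}, X_ρ) ≤ √γ·dist(x_t, X_ρ) + η·G_f, and consequently dist(x_{t+1}, X_ρ) ≤ γ^{t/2}·dist(x_1, X_ρ) + η·G_f/(1 − √γ). -/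
open scoped RealInnerProductSpace Classical

/-!
Let `m = [g x + ρ]₊`. The Polyak step at `x` is the projection onto the half-space
`{z | g x + ⟪s, z - x⟫ + ρ ≤ 0}`, which contains `X_ρ`. Projecting `x` itself lowers the squared
distance to any point of `X_ρ` by at least `m² / ‖s‖²`, and projecting `y` instead costs at most
`‖y - x‖`. So it suffices to have the error bound `σ * dist(x, X_ρ) ≤ m`.

For the error bound, let `p` be the point of `{g ≤ -ε}` nearest to `x`. Every point of the
half-space `{z | 0 ≤ ⟪x - p, z - p⟫}` has `g ≥ -ε`, and a Lagrange multiplier for this half-space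
turns `x - p` into a subgradient `l • (x - p)` at `p`, of norm at least `σ`; its affine minorant
evaluated at `x` is the error bound for `ρ = ε`. Convexity along the segment from `p` to `x`
transfers it to every `ρ ≤ ε`.
-/

section ConvexFunctions

variable {E : Type*} [AddCommGroup E] [Module ℝ E]

theorem exists_lineMap_le_of_convexOn {g : E → ℝ} (hg : ConvexOn ℝ Set.univ g) {x z : E} {b : ℝ}
    (hz : g z ≤ b) (hx : b < g x) :
    ∃ θ ∈ Set.Icc (0 : ℝ) 1, θ * (g x - g z) = b - g z ∧ g (AffineMap.lineMap z x θ) ≤ b := by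
  have hzx : 0 < g x - g z := by linarith
  have hθ : (b - g z) / (g x - g z) ∈ Set.Icc (0 : ℝ) 1 :=
    ⟨div_nonneg (by linarith) hzx.le, (div_le_one hzx).2 (by linarith)⟩
  have hmul : (b - g z) / (g x - g z) * (g x - g z) = b - g z := div_mul_cancel₀ _ hzx.ne'
  refine ⟨_, hθ, hmul, ?_⟩
  have hconv := hg.2 (Set.mem_univ z) (Set.mem_univ x) (sub_nonneg.2 hθ.2) hθ.1
    (sub_add_cancel 1 _)
  rw [AffineMap.lineMap_apply_module]
  simp only [smul_eq_mul] at hconv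
  linarith

theorem add_mul_nonneg_of_convexOn {K : Set E} {h : E → ℝ} (hh : ConvexOn ℝ K h)
    (φ : E →ₗ[ℝ] ℝ) {c : ℝ} (hnonneg : ∀ z ∈ K, φ z = c → 0 ≤ h z)
    {w z : E} (hw : w ∈ K) (hz : z ∈ K) (hcw : c < φ w) (hzc : φ z < c) :
    0 ≤ (c - φ z) * h w + (φ w - c) * h z := by
  have hpos : 0 < φ w - φ z := by linarith
  have hα : 0 ≤ (c - φ z) / (φ w - φ z) := div_nonneg (by linarith) hpos.le
  have hβ : 0 ≤ (φ w - c) / (φ w - φ z) := div_nonneg (by linarith) hpos.le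
  have hαβ : (c - φ z) / (φ w - φ z) + (φ w - c) / (φ w - φ z) = 1 := by
    field_simp
    ring
  have hφ : φ (((c - φ z) / (φ w - φ z)) • w + ((φ w - c) / (φ w - φ z)) • z) = c := by
    simp only [map_add, map_smul, smul_eq_mul]
    field_simp
    ring
  have hconv := (hnonneg _ (hh.1 hw hz hα hβ hαβ) hφ).trans (hh.2 hw hz hα hβ hαβ)
  calc 0 ≤ (φ w - φ z) *
        (((c - φ z) / (φ w - φ z)) • h w + ((φ w - c) / (φ w - φ z)) • h z) :=
        mul_nonneg hpos.le hconv
    _ = (c - φ z) * h w + (φ w - c) * h z := by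
        simp only [smul_eq_mul]
        field_simp

-- The multiplier separates the slopes `h z / (φ z - c)` on the two sides of the hyperplane.
theorem exists_lagrange_multiplier_of_convexOn {K : Set E} {h : E → ℝ} (hh : ConvexOn ℝ K h)
    (φ : E →ₗ[ℝ] ℝ) {c : ℝ} (hslater : ∃ z ∈ K, c < φ z)
    (hnonneg : ∀ z ∈ K, c ≤ φ z → 0 ≤ h z) :
    ∃ l : ℝ, 0 ≤ l ∧ ∀ z ∈ K, l * (φ z - c) ≤ h z := by
  have hne : {z ∈ K | c < φ z}.Nonempty := hslater
  let slope : E → ℝ := fun z => h z / (φ z - c)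
  have hsep : ∀ a ∈ insert 0 (slope '' {z ∈ K | φ z < c}), ∀ b ∈ slope '' {z ∈ K | c < φ z},
      a ≤ b := by
    rintro _ (rfl | ⟨z, ⟨hz, hzc⟩, rfl⟩) _ ⟨w, ⟨hw, hcw⟩, rfl⟩
    · exact div_nonneg (hnonneg w hw hcw.le) (sub_nonneg.2 hcw.le)
    · have hcross := add_mul_nonneg_of_convexOn hh φ (fun q hq hφq => hnonneg q hq hφq.ge)
        hw hz hcw hzc
      change h z / (φ z - c) ≤ h w / (φ w - c)
      rw [← neg_sub c, div_neg, ← neg_div, div_le_div_iff₀ (sub_pos.2 hzc) (sub_pos.2 hcw)]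
      linarith
  obtain ⟨l, hl_upper, hl_lower⟩ :=
    exists_between_of_forall_le (Set.insert_nonempty _ _) (hne.image slope) hsep
  refine ⟨l, hl_upper (Set.mem_insert _ _), fun z hz => ?_⟩
  rcases lt_trichotomy (φ z) c with hzc | hzc | hzc
  · exact (div_le_iff_of_neg (sub_neg.2 hzc)).1
      (hl_upper (Set.mem_insert_of_mem _ ⟨z, ⟨hz, hzc⟩, rfl⟩))
  · simpa [hzc] using hnonneg z hz hzc.ge
  · exact (le_div_iff₀ (sub_pos.2 hzc)).1 (hl_lower ⟨z, ⟨hz, hzc⟩, rfl⟩)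

end ConvexFunctions

theorem sq_max_zero_sub_max_zero_le {α : Type*} [CommRing α] [LinearOrder α]
    [IsStrictOrderedRing α] (a b : α) :
    (max a 0 - max b 0) ^ 2 ≤ (max a 0 - max b 0) * (a - b) := by
  rcases le_total a 0 with ha | ha <;> rcases le_total b 0 with hb | hb <;>
    simp only [ha, hb, max_eq_left, max_eq_right] <;> nlinarith

theorem le_pow_mul_add_div_of_le_mul_add {α : Type*} [Field α] [LinearOrder α]
    [IsStrictOrderedRing α] {a : ℕ → α} {r δ : α} {T : ℕ} (hr₀ : 0 ≤ r) (hr₁ : r < 1) (hδ : 0 ≤ δ)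
    (ha : ∀ n < T, a (n + 1) ≤ r * a n + δ) {n : ℕ} (hn : n ≤ T) :
    a n ≤ r ^ n * a 0 + δ / (1 - r) := by
  have hr : 0 < 1 - r := sub_pos.2 hr₁
  induction n with
  | zero => simpa using div_nonneg hδ hr.le
  | succ n ih =>
    calc a (n + 1) ≤ r * a n + δ := ha n hn
      _ ≤ r * (r ^ n * a 0 + δ / (1 - r)) + δ := by gcongr; exact ih (by omega)
      _ = r ^ (n + 1) * a 0 + δ / (1 - r) := by field_simp; ring

section NormedSpace

variable {E : Type*} [NormedAddCommGroup E] [NormedSpace ℝ E]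

/-- Radial retraction onto the closed ball of radius `R` around the origin, which in an inner
product space is the metric projection; `projBall` is the case of `ℝ^d`. -/
noncomputable def ballProj (R : ℝ) (v : E) : E :=
  (R / max R ‖v‖) • v

theorem ballProj_mem_closedBall {R : ℝ} (hR : 0 ≤ R) (v : E) :
    ballProj R v ∈ Metric.closedBall (0 : E) R := by
  have hmax : 0 ≤ max R ‖v‖ := hR.trans (le_max_left _ _)
  rw [mem_closedBall_zero_iff, ballProj, norm_smul, Real.norm_of_nonneg (div_nonneg hR hmax),
    div_mul_eq_mul_div]
  exact div_le_of_le_mul₀ hmax hR (mul_le_mul_of_nonneg_left (le_max_right _ _) hR)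

end NormedSpace

section InnerProductSpace

variable {E : Type*} [NormedAddCommGroup E] [InnerProductSpace ℝ E]

/-- `s` is a subgradient at `x` of `g`, a real function on an inner product space;
`IsSubgradAt` is the case of `ℝ^d`. -/
def HasSubgradientAt (g : E → ℝ) (x s : E) : Prop :=
  ∀ y, g x + ⟪s, y - x⟫ ≤ g y

/-- The Polyak feasibility step from `y`: the projection of `y` onto the half-space
`{z | g x + ⟪s, z - x⟫ + ρ ≤ 0}`. For `s = 0` it is `y`, whatever the value of the division. -/
noncomputable def polyakStep (g : E → ℝ) (ρ : ℝ) (x s y : E) : E :=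
  y - (max (g x + ⟪s, y - x⟫ + ρ) 0 / ‖s‖ ^ 2) • s

theorem norm_sub_le_norm_sub_of_inner_nonneg {v w c : E} (h : 0 ≤ ⟪v - w, w - c⟫) :
    ‖w - c‖ ≤ ‖v - c‖ := by
  refine le_of_sq_le_sq ?_ (norm_nonneg _)
  rw [← sub_add_sub_cancel v w c, norm_add_sq_real]
  nlinarith [sq_nonneg ‖v - w‖]

theorem norm_ballProj_sub_le {R : ℝ} {c : E} (hc : c ∈ Metric.closedBall (0 : E) R) (v : E) :
    ‖ballProj R v - c‖ ≤ ‖v - c‖ := by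
  rw [mem_closedBall_zero_iff] at hc
  have hR : 0 ≤ R := (norm_nonneg c).trans hc
  apply norm_sub_le_norm_sub_of_inner_nonneg
  rcases le_or_gt ‖v‖ R with hvR | hvR
  · have hfix : ballProj R v = v := by
      rcases eq_or_ne R 0 with rfl | hR₀
      · simp [ballProj, norm_le_zero_iff.1 hvR]
      · rw [ballProj, max_eq_left hvR, div_self hR₀, one_smul]
    simp [hfix]
  · have hv : 0 < ‖v‖ := hR.trans_lt hvR
    have hinner : ⟪v, c⟫ ≤ R * ‖v‖ :=
      (real_inner_le_norm v c).trans (by rw [mul_comm]; gcongr)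
    rw [ballProj, max_eq_right hvR.le]
    calc 0 ≤ (1 - R / ‖v‖) * (R * ‖v‖ - ⟪v, c⟫) :=
          mul_nonneg (sub_nonneg.2 ((div_le_one hv).2 hvR.le)) (sub_nonneg.2 hinner)
      _ = ⟪(1 - R / ‖v‖) • v, (R / ‖v‖) • v - c⟫ := by
          rw [real_inner_smul_left, inner_sub_right, real_inner_smul_right,
            real_inner_self_eq_norm_sq]
          field_simp
      _ = ⟪v - (R / ‖v‖) • v, (R / ‖v‖) • v - c⟫ := by rw [sub_smul, one_smul]

theorem norm_sub_div_smul_sq_le {s v : E} {k : ℝ} (hk : k ^ 2 ≤ k * ⟪s, v⟫) :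
    ‖v - (k / ‖s‖ ^ 2) • s‖ ^ 2 ≤ ‖v‖ ^ 2 - k ^ 2 / ‖s‖ ^ 2 := by
  rcases eq_or_ne s 0 with rfl | hs
  · simp
  · have hs : ‖s‖ ≠ 0 := norm_ne_zero_iff.2 hs
    calc ‖v - (k / ‖s‖ ^ 2) • s‖ ^ 2
        = ‖v‖ ^ 2 - (2 * (k * ⟪s, v⟫) - k ^ 2) / ‖s‖ ^ 2 := by
          rw [norm_sub_sq_real, real_inner_smul_right, real_inner_comm, norm_smul, mul_pow,
            Real.norm_eq_abs, sq_abs]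
          field_simp
          ring
      _ ≤ ‖v‖ ^ 2 - k ^ 2 / ‖s‖ ^ 2 := by
          gcongr
          linarith

theorem polyakStep_zero (g : E → ℝ) (ρ : ℝ) (x y : E) : polyakStep g ρ x 0 y = y := by
  simp [polyakStep]

theorem norm_polyakStep_sub_polyakStep_le (g : E → ℝ) (ρ : ℝ) (x s y z : E) :
    ‖polyakStep g ρ x s y - polyakStep g ρ x s z‖ ≤ ‖y - z‖ := by
  let excess : E → ℝ := fun w => g x + ⟪s, w - x⟫ + ρ
  have hexcess : excess y - excess z = ⟪s, y - z⟫ := by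
    simp only [excess, inner_sub_right]
    ring
  have hstep : polyakStep g ρ x s y - polyakStep g ρ x s z =
      (y - z) - ((max (excess y) 0 - max (excess z) 0) / ‖s‖ ^ 2) • s := by
    simp only [polyakStep, excess, sub_div]
    module
  have hfirm := sq_max_zero_sub_max_zero_le (excess y) (excess z)
  rw [hexcess] at hfirm
  rw [hstep]
  exact le_of_sq_le_sq ((norm_sub_div_smul_sq_le hfirm).trans (sub_le_self _ (by positivity)))
    (norm_nonneg _)

theorem norm_polyakStep_self_sub_sq_le {g : E → ℝ} {ρ : ℝ} {x s c : E}
    (hs : HasSubgradientAt g x s) (hc : g c ≤ -ρ) :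
    ‖polyakStep g ρ x s x - c‖ ^ 2 ≤ ‖x - c‖ ^ 2 - max (g x + ρ) 0 ^ 2 / ‖s‖ ^ 2 := by
  have hinner : g x + ρ ≤ ⟪s, x - c⟫ := by
    have hsc := hs c
    rw [← neg_sub x c, inner_neg_right] at hsc
    linarith
  have hk : max (g x + ρ) 0 ^ 2 ≤ max (g x + ρ) 0 * ⟪s, x - c⟫ := by
    rcases le_total (g x + ρ) 0 with h | h
    · simp [h]
    · rw [max_eq_left h, sq]
      gcongr
  have hstep : polyakStep g ρ x s x - c = (x - c) - (max (g x + ρ) 0 / ‖s‖ ^ 2) • s := by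
    rw [polyakStep, sub_self, inner_zero_right, add_zero, sub_right_comm]
  rw [hstep]
  exact norm_sub_div_smul_sq_le hk

theorem norm_polyakStep_self_sub_le {g : E → ℝ} {ρ σ G : ℝ} {x s c : E} (hσ : 0 < σ)
    (hs : HasSubgradientAt g x s) (hsG : ‖s‖ ≤ G) (hc : g c ≤ -ρ)
    (herr : σ * ‖x - c‖ ≤ max (g x + ρ) 0) :
    ‖polyakStep g ρ x s x - c‖ ≤ √(1 - σ ^ 2 / G ^ 2) * ‖x - c‖ := by
  rcases eq_or_ne s 0 with rfl | hs₀
  · have hmin : g x ≤ g c := by simpa using hs c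
    rw [max_eq_right (by linarith)] at herr
    have hxc : ‖x - c‖ = 0 := le_antisymm (nonpos_of_mul_nonpos_right herr hσ) (norm_nonneg _)
    rw [polyakStep_zero, hxc, mul_zero]
  · have hdecrease : (σ * ‖x - c‖) ^ 2 / G ^ 2 ≤ max (g x + ρ) 0 ^ 2 / ‖s‖ ^ 2 := by gcongr
    have hsq : ‖polyakStep g ρ x s x - c‖ ^ 2 ≤ (1 - σ ^ 2 / G ^ 2) * ‖x - c‖ ^ 2 := by
      linarith [norm_polyakStep_self_sub_sq_le hs hc, hdecrease,
        show (σ * ‖x - c‖) ^ 2 / G ^ 2 = σ ^ 2 / G ^ 2 * ‖x - c‖ ^ 2 by ring]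
    calc ‖polyakStep g ρ x s x - c‖
        ≤ √((1 - σ ^ 2 / G ^ 2) * ‖x - c‖ ^ 2) := Real.le_sqrt_of_sq_le hsq
      _ = √(1 - σ ^ 2 / G ^ 2) * ‖x - c‖ := by
          rw [Real.sqrt_mul' _ (sq_nonneg _), Real.sqrt_sq (norm_nonneg _)]

theorem le_of_inner_sub_nonneg_of_convexOn {g : E → ℝ} (hg : ConvexOn ℝ Set.univ g) {a : ℝ}
    {x p : E} (hx : a < g x) (hp : g p ≤ a) (hproj : ∀ w, g w ≤ a → ⟪x - p, w - p⟫ ≤ 0)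
    {z : E} (hz : 0 ≤ ⟪x - p, z - p⟫) : a ≤ g z := by
  by_contra! hlt
  obtain ⟨θ, ⟨hθ₀, hθ₁⟩, hθ, hle⟩ := exists_lineMap_le_of_convexOn hg hlt.le hx
  have hxp : 0 < ⟪x - p, x - p⟫ := by
    refine real_inner_self_pos.2 (sub_ne_zero.2 ?_)
    rintro rfl
    exact hp.not_gt hx
  have hθ_pos : 0 < θ := by
    refine hθ₀.lt_of_ne ?_
    rintro rfl
    linarith
  have hinner : ⟪x - p, AffineMap.lineMap z x θ - p⟫ =
      (1 - θ) * ⟪x - p, z - p⟫ + θ * ⟪x - p, x - p⟫ := by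
    rw [AffineMap.lineMap_apply_module,
      show (1 - θ) • z + θ • x - p = (1 - θ) • (z - p) + θ • (x - p) by module,
      inner_add_right, real_inner_smul_right, real_inner_smul_right]
  have hpos : 0 < (1 - θ) * ⟪x - p, z - p⟫ + θ * ⟪x - p, x - p⟫ :=
    add_pos_of_nonneg_of_pos (mul_nonneg (sub_nonneg.2 hθ₁) hz) (mul_pos hθ_pos hxp)
  exact (hproj _ hle).not_gt (hinner ▸ hpos)

theorem exists_nonneg_hasSubgradientAt_smul_sub {g : E → ℝ} (hg : ConvexOn ℝ Set.univ g) {a : ℝ}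
    {x p : E} (hx : a < g x) (hp : g p = a) (hproj : ∀ w, g w ≤ a → ⟪x - p, w - p⟫ ≤ 0) :
    ∃ l : ℝ, 0 ≤ l ∧ HasSubgradientAt g p (l • (x - p)) := by
  have hslater : ⟪x - p, p⟫ < ⟪x - p, x⟫ := by
    rw [← sub_pos, ← inner_sub_right]
    refine real_inner_self_pos.2 (sub_ne_zero.2 ?_)
    rintro rfl
    exact hx.ne' hp
  obtain ⟨l, hl, hmul⟩ := exists_lagrange_multiplier_of_convexOn (hg.add_const (-a))
    (innerₗ E (x - p)) ⟨x, Set.mem_univ x, hslater⟩ (fun z _ hz => by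
      rw [innerₗ_apply_apply, ← sub_nonneg, ← inner_sub_right] at hz
      simpa using le_of_inner_sub_nonneg_of_convexOn hg hx hp.le hproj hz)
  refine ⟨l, hl, fun z => ?_⟩
  have hz := hmul z (Set.mem_univ z)
  rw [innerₗ_apply_apply, ← inner_sub_right] at hz
  rw [real_inner_smul_left, hp]
  simp only [Pi.add_apply] at hz
  linarith

theorem mul_norm_sub_le_of_le_norm_subgradient {g : E → ℝ} (hg : ConvexOn ℝ Set.univ g)
    {a σ : ℝ} {x p : E} (hx : a < g x) (hp : g p = a)
    (hproj : ∀ w, g w ≤ a → ⟪x - p, w - p⟫ ≤ 0) (hσ : ∀ s, HasSubgradientAt g p s → σ ≤ ‖s‖) :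
    σ * ‖x - p‖ ≤ g x - a := by
  obtain ⟨l, hl, hsub⟩ := exists_nonneg_hasSubgradientAt_smul_sub hg hx hp hproj
  have hnorm : ‖l • (x - p)‖ = l * ‖x - p‖ := by rw [norm_smul, Real.norm_of_nonneg hl]
  calc σ * ‖x - p‖ ≤ ‖l • (x - p)‖ * ‖x - p‖ := by gcongr; exact hσ _ hsub
    _ = ⟪l • (x - p), x - p⟫ := by
        rw [hnorm, real_inner_smul_left, real_inner_self_eq_norm_sq]
        ring
    _ ≤ g x - a := by linarith [hsub x]

section CompleteSpace

variable [CompleteSpace E]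

theorem exists_infDist_eq_norm_sub_and_inner_nonpos {K : Set E} (hne : K.Nonempty)
    (hclosed : IsClosed K) (hconv : Convex ℝ K) (x : E) :
    ∃ p ∈ K, Metric.infDist x K = ‖x - p‖ ∧ ∀ w ∈ K, ⟪x - p, w - p⟫ ≤ 0 := by
  obtain ⟨p, hp, hmin⟩ := exists_norm_eq_iInf_of_complete_convex hne hclosed.isComplete hconv x
  refine ⟨p, hp, ?_, (norm_eq_iInf_iff_real_inner_le_zero hconv hp).1 hmin⟩
  simp only [hmin, Metric.infDist_eq_iInf, dist_eq_norm]

theorem mul_infDist_sublevel_le {g : E → ℝ} (hg : ConvexOn ℝ Set.univ g)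
    (hlsc : LowerSemicontinuous g) {a b σ : ℝ} (hσ₀ : 0 ≤ σ) (hab : a ≤ b) (hne : ∃ z, g z = a)
    (hσ : ∀ z, g z = a → ∀ s, HasSubgradientAt g z s → σ ≤ ‖s‖) (x : E) :
    σ * Metric.infDist x {z | g z ≤ b} ≤ max (g x - b) 0 := by
  rcases le_or_gt (g x) b with hx | hx
  · have hmem : x ∈ {z | g z ≤ b} := hx
    rw [Metric.infDist_zero_of_mem hmem, mul_zero]
    exact le_max_right _ _
  obtain ⟨p, hpa : g p ≤ a, -, hproj⟩ := exists_infDist_eq_norm_sub_and_inner_nonpos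
    (K := {z | g z ≤ a}) (hne.imp fun _ hz => hz.le) (hlsc.isClosed_preimage a)
    (by simpa using hg.convex_le a) x
  have hp : g p = a := hpa.antisymm
    (le_of_inner_sub_nonneg_of_convexOn hg (hab.trans_lt hx) hpa hproj (by simp))
  have hxp := mul_norm_sub_le_of_le_norm_subgradient hg (hab.trans_lt hx) hp hproj (hσ p hp)
  obtain ⟨θ, ⟨-, hθ₁⟩, hθ, hle⟩ := exists_lineMap_le_of_convexOn hg (hpa.trans hab) hx
  have hdist : dist x (AffineMap.lineMap p x θ) = (1 - θ) * ‖x - p‖ := by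
    rw [dist_comm, dist_lineMap_right, Real.norm_of_nonneg (sub_nonneg.2 hθ₁), dist_comm,
      dist_eq_norm]
  calc σ * Metric.infDist x {z | g z ≤ b}
      ≤ σ * ((1 - θ) * ‖x - p‖) := by
        rw [← hdist]
        gcongr
        exact Metric.infDist_le_dist_of_mem hle
    _ = (1 - θ) * (σ * ‖x - p‖) := by ring
    _ ≤ (1 - θ) * (g x - a) := mul_le_mul_of_nonneg_left hxp (sub_nonneg.2 hθ₁)
    _ = g x - b := by
        rw [hp] at hθ
        linarith
    _ ≤ max (g x - b) 0 := le_max_left _ _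

theorem infDist_ballProj_polyakStep_le {g : E → ℝ} (hg : ConvexOn ℝ Set.univ g)
    (hlsc : LowerSemicontinuous g) {R G ε σ ρ : ℝ} (hσ₀ : 0 < σ) (hρε : ρ ≤ ε)
    (hne : ∃ z, g z = -ε) (hσ : ∀ z, g z = -ε → ∀ s, HasSubgradientAt g z s → σ ≤ ‖s‖)
    (hR : {z | g z ≤ -ρ} ⊆ Metric.closedBall 0 R) {x s : E} (hs : HasSubgradientAt g x s)
    (hsG : ‖s‖ ≤ G) (y : E) :
    Metric.infDist (ballProj R (polyakStep g ρ x s y)) {z | g z ≤ -ρ} ≤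
      √(1 - σ ^ 2 / G ^ 2) * Metric.infDist x {z | g z ≤ -ρ} + ‖y - x‖ := by
  obtain ⟨c, hc, hdist, -⟩ := exists_infDist_eq_norm_sub_and_inner_nonpos
    (K := {z | g z ≤ -ρ}) (hne.imp fun z hz => hz.le.trans (neg_le_neg hρε))
    (hlsc.isClosed_preimage (-ρ)) (by simpa using hg.convex_le (-ρ)) x
  have herr := mul_infDist_sublevel_le hg hlsc hσ₀.le (neg_le_neg hρε) hne hσ x
  rw [hdist, sub_neg_eq_add] at herr
  calc Metric.infDist (ballProj R (polyakStep g ρ x s y)) {z | g z ≤ -ρ}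
      ≤ ‖ballProj R (polyakStep g ρ x s y) - c‖ := by
        rw [← dist_eq_norm]
        exact Metric.infDist_le_dist_of_mem hc
    _ ≤ ‖polyakStep g ρ x s y - c‖ := norm_ballProj_sub_le (hR hc) _
    _ ≤ ‖polyakStep g ρ x s y - polyakStep g ρ x s x‖ + ‖polyakStep g ρ x s x - c‖ :=
        norm_sub_le_norm_sub_add_norm_sub _ _ _
    _ ≤ ‖y - x‖ + √(1 - σ ^ 2 / G ^ 2) * ‖x - c‖ :=
        add_le_add (norm_polyakStep_sub_polyakStep_le g ρ x s y x)
          (norm_polyakStep_self_sub_le hσ₀ hs hsG hc herr)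
    _ = √(1 - σ ^ 2 / G ^ 2) * Metric.infDist x {z | g z ≤ -ρ} + ‖y - x‖ := by
        rw [hdist, add_comm]

theorem stmt16_general {T : ℕ} {R Gf Gg ε σ η ρ : ℝ} {g : E → ℝ} {v : ℕ → E → E} {x y s : ℕ → E}
    (hGg : 0 < Gg) (hg : ConvexOn ℝ Set.univ g) (hlsc : LowerSemicontinuous g)
    (hR : {z | g z ≤ -ρ} ⊆ Metric.closedBall 0 R)
    (hv : ∀ t ∈ Finset.Icc 1 T, ∀ z ∈ Metric.closedBall (0 : E) R, ‖v t z‖ ≤ Gf)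
    (hGg_bound : ∀ z ∈ Metric.closedBall (0 : E) R, ∀ s, HasSubgradientAt g z s → ‖s‖ ≤ Gg)
    (hσ₀ : 0 < σ) (hne : ∃ z, g z = -ε)
    (hσ : ∀ z, g z = -ε → ∀ s, HasSubgradientAt g z s → σ ≤ ‖s‖)
    (hη : 0 ≤ η) (hρε : ρ ≤ ε) (hx1 : x 1 ∈ Metric.closedBall (0 : E) R)
    (hs : ∀ t ∈ Finset.Icc 1 T, HasSubgradientAt g (x t) (s t))
    (hy : ∀ t ∈ Finset.Icc 1 T, y t = x t - η • v t (x t))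
    (hupd : ∀ t ∈ Finset.Icc 1 T, x (t + 1) = ballProj R (polyakStep g ρ (x t) (s t) (y t))) :
    ∀ t ∈ Finset.Icc 1 T,
      Metric.infDist (x (t + 1)) {z | g z ≤ -ρ} ≤
        √(1 - σ ^ 2 / Gg ^ 2) * Metric.infDist (x t) {z | g z ≤ -ρ} + η * Gf ∧
      Metric.infDist (x (t + 1)) {z | g z ≤ -ρ} ≤
        √(1 - σ ^ 2 / Gg ^ 2) ^ t * Metric.infDist (x 1) {z | g z ≤ -ρ} +
          η * Gf / (1 - √(1 - σ ^ 2 / Gg ^ 2)) := by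
  have hball : ∀ t ∈ Finset.Icc 1 T, x t ∈ Metric.closedBall (0 : E) R := by
    intro t ht
    obtain ⟨ht₁, htT⟩ := Finset.mem_Icc.1 ht
    induction t, ht₁ using Nat.le_induction with
    | base => exact hx1
    | succ t ht₁ _ =>
      rw [hupd t (Finset.mem_Icc.2 ⟨ht₁, by omega⟩)]
      exact ballProj_mem_closedBall (Metric.nonempty_closedBall.1 ⟨_, hx1⟩) _
  have hmove : ∀ t ∈ Finset.Icc 1 T, ‖y t - x t‖ ≤ η * Gf := by
    intro t ht
    rw [hy t ht, sub_sub_cancel_left, norm_neg, norm_smul, Real.norm_of_nonneg hη]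
    exact mul_le_mul_of_nonneg_left (hv t ht _ (hball t ht)) hη
  have hstep : ∀ t ∈ Finset.Icc 1 T, Metric.infDist (x (t + 1)) {z | g z ≤ -ρ} ≤
      √(1 - σ ^ 2 / Gg ^ 2) * Metric.infDist (x t) {z | g z ≤ -ρ} + η * Gf := by
    intro t ht
    rw [hupd t ht]
    exact (infDist_ballProj_polyakStep_le hg hlsc hσ₀ hρε hne hσ hR (hs t ht)
      (hGg_bound _ (hball t ht) _ (hs t ht)) _).trans (add_le_add_right (hmove t ht) _)
  have hrate : √(1 - σ ^ 2 / Gg ^ 2) < 1 := by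
    rw [Real.sqrt_lt' one_pos, one_pow]
    exact sub_lt_self _ (by positivity)
  intro t ht
  exact ⟨hstep t ht, le_pow_mul_add_div_of_le_mul_add
    (a := fun n => Metric.infDist (x (n + 1)) {z | g z ≤ -ρ}) (Real.sqrt_nonneg _) hrate
    ((norm_nonneg _).trans (hmove t ht))
    (fun n hn => hstep (n + 1) (Finset.mem_Icc.2 ⟨by omega, hn⟩)) (Finset.mem_Icc.1 ht).2⟩

end CompleteSpace

end InnerProductSpace

theorem ite_projBall_eq_ballProj_polyakStep {d : ℕ} (g : EuclideanSpace ℝ (Fin d) → ℝ) (R ρ : ℝ)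
    (x s y : EuclideanSpace ℝ (Fin d)) :
    (if s ≠ 0 then projBall R (y - (max (g x + ⟪s, y - x⟫ + ρ) 0 / ‖s‖ ^ 2) • s)
      else projBall R y) = ballProj R (polyakStep g ρ x s y) := by
  split_ifs with hs
  · rfl
  · rw [not_not.1 hs, polyakStep_zero]
    rfl

theorem stmt16 {d T : ℕ} (hT : 1 ≤ T)
    {R Gf Gg ε σ η ρ : ℝ}
    (g : EuclideanSpace ℝ (Fin d) → ℝ)
    (f : ℕ → EuclideanSpace ℝ (Fin d) → ℝ)
    (x y s : ℕ → EuclideanSpace ℝ (Fin d))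
    (hR : 0 < R) (hGf : 0 < Gf) (hGg : 0 < Gg)
    (hgconv : ConvexOn ℝ Set.univ g)
    (hA1 : {z : EuclideanSpace ℝ (Fin d) | g z ≤ 0} ⊆ Metric.closedBall 0 R)
    (hfconv : ∀ t ∈ Finset.Icc 1 T, ConvexOn ℝ Set.univ (f t))
    (hfdiff : ∀ t ∈ Finset.Icc 1 T, Differentiable ℝ (f t))
    (hA2 : ∀ t ∈ Finset.Icc 1 T, ∀ z ∈ Metric.closedBall (0 : EuclideanSpace ℝ (Fin d)) R,
      ‖gradient (f t) z‖ ≤ Gf)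
    (hA3 : ∀ z ∈ Metric.closedBall (0 : EuclideanSpace ℝ (Fin d)) R,
      ∀ sz, IsSubgradAt g z sz → ‖sz‖ ≤ Gg)
    (hσ : 0 < σ) (hε : 0 < ε) (hσGg : σ ≤ Gg)
    (hA4ne : ∃ z, g z = -ε)
    (hA4 : ∀ z : EuclideanSpace ℝ (Fin d), g z = -ε → ∀ sz, IsSubgradAt g z sz → σ ≤ ‖sz‖)
    (hη : 0 < η) (hρ0 : 0 ≤ ρ) (hρε : ρ ≤ ε)
    (hx1 : x 1 ∈ Metric.closedBall (0 : EuclideanSpace ℝ (Fin d)) R)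
    (hs : ∀ t ∈ Finset.Icc 1 T, IsSubgradAt g (x t) (s t))
    (hy : ∀ t ∈ Finset.Icc 1 T, y t = x t - η • gradient (f t) (x t))
    (hupd : ∀ t ∈ Finset.Icc 1 T,
      x (t + 1) = if s t ≠ 0 then
          projBall R (y t - ((max (g (x t) + ⟪s t, y t - x t⟫ + ρ) 0) / ‖s t‖ ^ 2) • s t)
        else projBall R (y t))
    :
    ∀ t ∈ Finset.Icc 1 T,
      Metric.infDist (x (t + 1)) {z : EuclideanSpace ℝ (Fin d) | g z ≤ -ρ} ≤
        Real.sqrt (1 - σ ^ 2 / Gg ^ 2) * Metric.infDist (x t) {z : EuclideanSpace ℝ (Fin d) | g z ≤ -ρ} + η * Gf ∧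
      Metric.infDist (x (t + 1)) {z : EuclideanSpace ℝ (Fin d) | g z ≤ -ρ} ≤
        Real.sqrt (1 - σ ^ 2 / Gg ^ 2) ^ t * Metric.infDist (x 1) {z : EuclideanSpace ℝ (Fin d) | g z ≤ -ρ} +
          η * Gf / (1 - Real.sqrt (1 - σ ^ 2 / Gg ^ 2)) :=
  stmt16_general (v := fun t => gradient (f t)) hGg hgconv
    (continuousOn_univ.1 (hgconv.continuousOn isOpen_univ)).lowerSemicontinuous
    (fun _ hz => hA1 (hz.trans (neg_nonpos.2 hρ0))) hA2 hA3 hσ hA4ne hA4 hη.le hρε hx1 hs hy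
    fun t ht => (hupd t ht).trans (ite_projBall_eq_ballProj_polyakStep g R ρ (x t) (s t) (y t))
end
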